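/- arXiv:2603.04599 — 6 statements merged into one kernel-verified Lean document; each statement's English description precedes it below -/
import Mathlib

section
/- Let G be a nontrivial torsion-free abelian group (written additively). Let k, ℓ, p, r be natural numbers, let M be a p × k integer matrix, N a p × ℓ integer matrix, K a r × k integer matrix, and L a r × ℓ integer matrix, and let b ∈ G^k be a tuple with some entry nonzero, where integer matrices act on tuples from G via ℤ-scalar multiplication. If there exists y ∈ G^ℓ with M·b = N·y and (K·b)_i ≠ (L·y)_i for every index i ∈ {1,…,r}, then there exists such a y each of whose entries is a 'valid rational combination' of the entries of b: for each j there exist a nonzero integer a_j and a vector c_j ∈ ℤ^k with a_j • y_j = Σ_i c_{j,i} • b_i. -/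
/-!
Let `B` be the span of the entries of `b` and let `T` be `G ⧸ B` modulo its torsion, so that the
kernel `H` of `q : G → T` consists exactly of the valid rational combinations of `b`. Given a
solution `y`, the span `Q` of the classes `q (y j)` is finitely generated and torsion-free over `ℤ`,
hence free, so `q` has a section `s : Q → G` over `Q`. Replacing `y j` by `y j - s (q (y j))` lands
in `H`, and it preserves the equations, because `q (N y) = q (M b) = 0`.

The section is free up to a homomorphism `Q → H`, and this freedom takes care of the inequations.
If `q ((L y) i) = 0`, the value `(L y) i` does not change. Otherwise the section only has to avoid a
prescribed value at the nonzero element `q ((L y) i)`. Subtracting `f(·) • h` from the section, for a fixed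
nonzero entry `h` of `b` and a suitable functional `f`, achieves this for all `i` at once
(`exists_dual_smul_ne`), because `ℤ` is infinite.
-/

open scoped BigOperators

/-- Action of an `e × m` integer matrix on an `m`-tuple from an additive abelian group `G`,
via `ℤ`-scalar multiplication: the `i`-th entry of `A · v` is `∑ j, A i j • v j`. -/
def intMatVec {G : Type*} [AddCommGroup G] {e m : ℕ}
    (A : Matrix (Fin e) (Fin m) ℤ) (v : Fin m → G) : Fin e → G :=
  fun i => ∑ j, A i j • v j

/-- On a free `ℤ`-module, finitely many conditions `f (w i) • h ≠ t i` at nonzero points `w i` can be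
satisfied simultaneously. In the inductive step `f` moves along a line `f + s • ψ` with `ψ` nonzero
at the new point; each condition excludes at most one `s`. -/
lemma exists_dual_smul_ne {G Q ι : Type*} [AddCommGroup G] [AddCommGroup Q] [Module.Free ℤ Q]
    (htf : ∀ (n : ℤ) (g : G), n • g = 0 → n = 0 ∨ g = 0) (h : G) (hh : h ≠ 0)
    (w : ι → Q) (t : ι → G) (S : Finset ι) (hw : ∀ i ∈ S, w i ≠ 0) :
    ∃ f : Q →ₗ[ℤ] ℤ, ∀ i ∈ S, f (w i) • h ≠ t i := by
  classical
  induction S using Finset.induction_on with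
  | empty => exact ⟨0, by simp⟩
  | insert a S _ ih =>
    obtain ⟨f, hf⟩ := ih fun i hi => hw i (Finset.mem_insert_of_mem hi)
    obtain ⟨ψ, hψ⟩ := Module.Projective.exists_dual_ne_zero ℤ (hw a (Finset.mem_insert_self a S))
    have hfin : (⋃ i ∈ insert a S, {s : ℤ | (f + s • ψ) (w i) • h = t i}).Finite := by
      refine Set.Finite.biUnion (Finset.finite_toSet _) fun i hi => Set.Subsingleton.finite ?_
      intro s hs s' hs'
      simp only [Set.mem_ofPred_eq, LinearMap.add_apply, LinearMap.smul_apply, smul_eq_mul] at hs hs'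
      by_cases hi0 : ψ (w i) = 0
      · -- The value at `w i` is constant along the line, and correct at `s = 0`.
        rcases Finset.mem_insert.1 hi with rfl | hiS
        · exact absurd hi0 hψ
        · exact absurd (by simpa [hi0] using hs) (hf i hiS)
      · have h0 : ((s - s') * ψ (w i)) • h = 0 := by
          rw [show (s - s') * ψ (w i) = (f (w i) + s * ψ (w i)) - (f (w i) + s' * ψ (w i)) by ring,
            sub_smul, hs, hs', sub_self]
        have h1 := (htf _ _ h0).resolve_right hh
        exact sub_eq_zero.1 ((mul_eq_zero.1 h1).resolve_right hi0)
    obtain ⟨s, hs⟩ := hfin.exists_notMem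
    refine ⟨f + s • ψ, fun i hi hbad => hs ?_⟩
    exact Set.mem_biUnion hi hbad

/-- The rational closure of the span of `b` is the kernel of a surjection onto a torsion-free
group, namely `G ⧸ span b` modulo its torsion. -/
lemma exists_quotient_by_closure.{u} {G : Type u} [AddCommGroup G] {k : ℕ} (b : Fin k → G) :
    ∃ (T : Type u) (_ : AddCommGroup T) (_ : Module.IsTorsionFree ℤ T) (q : G →ₗ[ℤ] T),
      Function.Surjective q ∧
      ∀ g, q g = 0 ↔ ∃ (a : ℤ) (c : Fin k → ℤ), a ≠ 0 ∧ a • g = ∑ i, c i • b i := by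
  let B := Submodule.span ℤ (Set.range b)
  let τ := Submodule.torsion ℤ (G ⧸ B)
  refine ⟨(G ⧸ B) ⧸ τ, inferInstance, Submodule.QuotientTorsion.instIsTorsionFree,
    τ.mkQ ∘ₗ B.mkQ, τ.mkQ_surjective.comp B.mkQ_surjective, fun g => ?_⟩
  have key : ∀ a : ℤ, a • B.mkQ g = 0 ↔ ∃ c : Fin k → ℤ, a • g = ∑ i, c i • b i := by
    intro a
    rw [← map_smul, Submodule.mkQ_apply, Submodule.Quotient.mk_eq_zero,
      Submodule.mem_span_range_iff_exists_fun]
    simp only [eq_comm]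
  rw [LinearMap.comp_apply, Submodule.mkQ_apply τ, Submodule.Quotient.mk_eq_zero,
    Submodule.mem_torsion_iff]
  constructor
  · rintro ⟨a, ha⟩
    obtain ⟨c, hc⟩ := (key a).1 ha
    exact ⟨a, c, nonZeroDivisors.coe_ne_zero a, hc⟩
  · rintro ⟨a, c, ha, hc⟩
    exact ⟨⟨a, mem_nonZeroDivisors_of_ne_zero ha⟩, (key a).2 ⟨c, hc⟩⟩

lemma map_intMatVec {G G' : Type*} [AddCommGroup G] [AddCommGroup G'] {e m : ℕ}
    (φ : G →ₗ[ℤ] G') (A : Matrix (Fin e) (Fin m) ℤ) (v : Fin m → G) (i : Fin e) :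
    φ (intMatVec A v i) = intMatVec A (fun j => φ (v j)) i := by
  simp [intMatVec]

lemma intMatVec_sub {G : Type*} [AddCommGroup G] {e m : ℕ}
    (A : Matrix (Fin e) (Fin m) ℤ) (v w : Fin m → G) (i : Fin e) :
    intMatVec A (fun j => v j - w j) i = intMatVec A v i - intMatVec A w i := by
  simp [intMatVec, smul_sub]

/-- Let `G` be a nontrivial torsion-free abelian group, and `b ∈ G^k` a tuple with some entry
nonzero.  If the system `M·b = N·y`, `(K·b)ᵢ ≠ (L·y)ᵢ (for all i)` has a solution `y ∈ G^ℓ`,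
then it has a solution each of whose entries is a valid rational combination of the entries
of `b`: for each `j` there are a nonzero integer `a_j` and integers `c_j` with
`a_j • y_j = ∑ i, c_{j i} • b_i`. -/
theorem stmt12 {G : Type*} [AddCommGroup G]
    (hnt : ∃ g : G, g ≠ 0)
    (htf : ∀ (n : ℤ) (g : G), n • g = 0 → n = 0 ∨ g = 0)
    (k ℓ p r : ℕ)
    (M : Matrix (Fin p) (Fin k) ℤ) (N : Matrix (Fin p) (Fin ℓ) ℤ)
    (K : Matrix (Fin r) (Fin k) ℤ) (L : Matrix (Fin r) (Fin ℓ) ℤ)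
    (b : Fin k → G) (hb : ∃ i, b i ≠ 0)
    (hsol : ∃ y : Fin ℓ → G, intMatVec M b = intMatVec N y ∧
      ∀ i, intMatVec K b i ≠ intMatVec L y i) :
    ∃ y : Fin ℓ → G, (intMatVec M b = intMatVec N y ∧
      ∀ i, intMatVec K b i ≠ intMatVec L y i) ∧
      ∀ j, ∃ (a : ℤ) (c : Fin k → ℤ), a ≠ 0 ∧ a • y j = ∑ i, c i • b i := by
  classical
  obtain ⟨y, hy, hne⟩ := hsol
  obtain ⟨i₀, hi₀⟩ := hb
  obtain ⟨T, _, _, q, hq, hker⟩ := exists_quotient_by_closure b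
  have hqb : ∀ i, q (b i) = 0 := fun i =>
    (hker _).2 ⟨1, Pi.single i 1, one_ne_zero, by simp [Pi.single_apply, ite_smul]⟩
  let Q := Submodule.span ℤ (Set.range fun j => q (y j))
  have : Module.Finite ℤ Q := Module.Finite.span_of_finite ℤ (Set.finite_range _)
  have : Module.Free ℤ Q := Module.free_of_finite_type_torsion_free'
  let Y : Fin ℓ → Q := fun j => ⟨q (y j), Submodule.subset_span ⟨j, rfl⟩⟩
  obtain ⟨s, hs⟩ := Module.projective_lifting_property q Q.subtype hq
  -- Relative to the section `s`, the `i`-th inequation fails exactly when `f` takes the value `t i`.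
  obtain ⟨f, hf⟩ := exists_dual_smul_ne htf (b i₀) hi₀ (fun i => intMatVec L Y i)
    (fun i => s (intMatVec L Y i) - (intMatVec L y i - intMatVec K b i))
    (Finset.univ.filter fun i => intMatVec L Y i ≠ 0) (by simp)
  let σ : Q →ₗ[ℤ] G := s - (LinearMap.toSpanSingleton ℤ G (b i₀)) ∘ₗ f
  have hσ : ∀ x, σ x = s x - f x • b i₀ := fun x => by simp [σ]
  have hqσ : ∀ x : Q, q (σ x) = x := fun x => by
    have : q (s x) = x := LinearMap.congr_fun hs x
    rw [hσ, map_sub, map_smul, hqb, smul_zero, sub_zero, this]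
  refine ⟨fun j => y j - σ (Y j), ⟨?_, ?_⟩, fun j => (hker _).1 ?_⟩
  · funext i
    have hNY : intMatVec N Y i = 0 := by
      apply Subtype.ext
      have h1 := map_intMatVec Q.subtype N Y i
      have h2 : q (intMatVec N y i) = 0 := by
        rw [← hy, map_intMatVec]
        simp [intMatVec, hqb]
      rw [map_intMatVec] at h2
      exact h1.trans h2
    rw [intMatVec_sub, ← map_intMatVec, hNY, map_zero, sub_zero, hy]
  · intro i heq
    rw [intMatVec_sub, ← map_intMatVec] at heq
    by_cases h0 : intMatVec L Y i = 0
    · rw [h0, map_zero, sub_zero] at heq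
      exact hne i heq
    · apply hf i (by simpa using h0)
      rw [hσ] at heq
      rw [heq]
      abel
  · rw [map_sub, hqσ, sub_self]
end

section
/- There is a computable function which, for every natural number k, takes a finite list v₁, …, v_m of vectors in ℤ^k (encoded as lists of integers of length k) and outputs a finite list b₁, …, b_ℓ of vectors in ℤ^k such that the family (b₁, …, b_ℓ) is linearly independent over ℤ and its ℤ-span in ℤ^k equals the ℤ-span of {v₁, …, v_m}. -/
/-!
The function is an unbounded search for a certificate. A basis `B` of the span of the rows of `V`
is certified by integer matrices `P`, `Q`, `C` such that `V = P * B`, `B = Q * V` (equality of the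
spans), and `B * C` is diagonal with nonzero diagonal entries (independence of the rows of `B`).
Validity of a certificate is a primitive recursive relation (`IsCert.primrecRel`), because it only
involves bounded quantifiers and finite sums of products of integers; so the search is computable
as soon as it always succeeds (`exists_computable_choice`).

A certificate always exists (`exists_isCert`): by the Smith normal form over the principal ideal
domain `ℤ`, the span `N` of the rows of `V` has a basis `bN i = a i • bM (f i)` with `bM` a basis
of `ℤ^k`, `f` injective and every `a i` nonzero. The rows of `B` are the `bN i`, and the columns of
`C` are the coordinate functionals of `bM` at the indices `f i`.
-/

/-- Interpret a list of integers as a vector in `ℤ^k` (padding with zeros / truncating). -/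
def listToVec (k : ℕ) (l : List ℤ) : Fin k → ℤ := fun i => l.getD i 0

open Finset

/-! ### Primitive recursive integer arithmetic, finite sums and bounded quantifiers -/

/-- The encoding of `ℤ` is by definition the one transported from `ℕ ⊕ ℕ`. -/
theorem primrec_intEquivNatSumNat : Primrec Equiv.intEquivNatSumNat :=
  Primrec.encode_iff.1 ((Primrec.encode (α := ℤ)).of_eq fun z => by
    rcases z with n | n <;> rfl)

theorem primrec_intEquivNatSumNat_symm : Primrec Equiv.intEquivNatSumNat.symm :=
  Primrec.encode_iff.1 ((Primrec.encode (α := ℕ ⊕ ℕ)).of_eq fun s => by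
    rcases s with n | n <;> rfl)

theorem primrec_int_toNat : Primrec Int.toNat :=
  (Primrec.sumCasesOn (g := fun _ n => n) (h := fun _ _ => 0) primrec_intEquivNatSumNat
    Primrec₂.right (Primrec₂.const 0)).of_eq fun z => by
    rcases z with n | n <;> rfl

theorem primrec_int_toNat_neg : Primrec fun z : ℤ => (-z).toNat :=
  (Primrec.sumCasesOn (g := fun _ _ => 0) (h := fun _ n => n + 1) primrec_intEquivNatSumNat
    (Primrec₂.const 0) (Primrec.succ.comp₂ Primrec₂.right)).of_eq fun z => by
    rcases z with n | n
    · change 0 = (-(n : ℤ)).toNat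
      omega
    · rfl

theorem primrec_int_subNat : Primrec₂ fun a b : ℕ => (a : ℤ) - b := by
  have h : Primrec fun p : ℕ × ℕ => if p.2 ≤ p.1 then
      Equiv.intEquivNatSumNat.symm (Sum.inl (p.1 - p.2))
      else Equiv.intEquivNatSumNat.symm (Sum.inr (p.2 - p.1 - 1)) :=
    Primrec.ite (Primrec.nat_le.comp Primrec.snd Primrec.fst)
      (primrec_intEquivNatSumNat_symm.comp (Primrec.sumInl.comp
        (Primrec.nat_sub.comp Primrec.fst Primrec.snd)))
      (primrec_intEquivNatSumNat_symm.comp (Primrec.sumInr.comp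
        (Primrec.nat_sub.comp (Primrec.nat_sub.comp Primrec.snd Primrec.fst) (Primrec.const 1))))
  refine h.of_eq fun p => ?_
  have h1 : ∀ n : ℕ, Equiv.intEquivNatSumNat.symm (Sum.inl n) = (n : ℤ) := fun _ => rfl
  have h2 : ∀ n : ℕ, Equiv.intEquivNatSumNat.symm (Sum.inr n) = -(n : ℤ) - 1 := fun n => by
    change Int.negSucc n = _
    omega
  rw [h1, h2]
  dsimp only
  split_ifs <;> omega

theorem primrec_int_add : Primrec₂ fun a b : ℤ => a + b := by
  have h : Primrec fun p : ℤ × ℤ =>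
      ((p.1.toNat + p.2.toNat : ℕ) : ℤ) - (((-p.1).toNat + (-p.2).toNat : ℕ) : ℤ) :=
    primrec_int_subNat.comp
      (Primrec.nat_add.comp (primrec_int_toNat.comp Primrec.fst)
        (primrec_int_toNat.comp Primrec.snd))
      (Primrec.nat_add.comp (primrec_int_toNat_neg.comp Primrec.fst)
        (primrec_int_toNat_neg.comp Primrec.snd))
  exact h.of_eq fun p => by dsimp only; omega

theorem primrec_int_mul : Primrec₂ fun a b : ℤ => a * b := by
  have h : Primrec fun p : ℤ × ℤ =>
      ((p.1.toNat * p.2.toNat + (-p.1).toNat * (-p.2).toNat : ℕ) : ℤ) -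
        ((p.1.toNat * (-p.2).toNat + (-p.1).toNat * p.2.toNat : ℕ) : ℤ) := by
    have p1 := primrec_int_toNat.comp (Primrec.fst (α := ℤ) (β := ℤ))
    have p2 := primrec_int_toNat.comp (Primrec.snd (α := ℤ) (β := ℤ))
    have n1 := primrec_int_toNat_neg.comp (Primrec.fst (α := ℤ) (β := ℤ))
    have n2 := primrec_int_toNat_neg.comp (Primrec.snd (α := ℤ) (β := ℤ))
    exact primrec_int_subNat.comp
      (Primrec.nat_add.comp (Primrec.nat_mul.comp p1 p2) (Primrec.nat_mul.comp n1 n2))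
      (Primrec.nat_add.comp (Primrec.nat_mul.comp p1 n2) (Primrec.nat_mul.comp n1 p2))
  refine h.of_eq fun ⟨a, b⟩ => ?_
  have ha : (a.toNat : ℤ) - ((-a).toNat : ℤ) = a := by omega
  have hb : (b.toNat : ℤ) - ((-b).toNat : ℤ) = b := by omega
  simp only [Nat.cast_add, Nat.cast_mul]
  conv_rhs => rw [← ha, ← hb]
  ring

theorem primrec_sum_range {α : Type*} [Primcodable α] {n : α → ℕ} {f : α → ℕ → ℤ}
    (hn : Primrec n) (hf : Primrec₂ f) : Primrec fun a => ∑ t ∈ range (n a), f a t := by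
  have h : Primrec fun a => (Nat.rec 0 (fun t s => s + f a t) (n a) : ℤ) :=
    Primrec.nat_rec' (g := fun _ => (0 : ℤ)) (h := fun a p => p.2 + f a p.1) hn
      (Primrec.const 0)
      (primrec_int_add.comp (Primrec.snd.comp Primrec.snd)
        (hf.comp Primrec.fst (Primrec.fst.comp Primrec.snd)))
  refine h.of_eq fun a => ?_
  induction n a with
  | zero => rfl
  | succ m ih => rw [sum_range_succ, ← ih]

theorem primrecPred_forall_lt {α : Type*} [Primcodable α] {n : α → ℕ} {p : α → ℕ → Prop}
    (hn : Primrec n) (hp : PrimrecRel p) : PrimrecPred fun a => ∀ t < n a, p a t :=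
  ((PrimrecRel.forall_mem_list (R := fun (t : ℕ) (a : α) => p a t)
    (hp.comp₂ Primrec₂.right Primrec₂.left)).comp
    (Primrec.list_range.comp hn) Primrec.id).of_eq fun a => by simp

/-! ### Unbounded search -/

/-- A total primitive recursive relation has a computable choice function: enumerate the codes of
all candidates and return the first one that satisfies the relation. -/
theorem exists_computable_choice {α β : Type*} [Primcodable α] [Primcodable β] {R : α → β → Prop}
    (hR : PrimrecRel R) (hex : ∀ a, ∃ b, R a b) :
    ∃ F : α → β, Computable F ∧ ∀ a, R a (F a) := by
  classical
  let g : α → ℕ → Option β := fun a n =>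
    (Encodable.decode n : Option β).bind fun b => if R a b then some b else none
  have hg : Primrec₂ g :=
    Primrec.option_bind (Primrec.decode.comp Primrec.snd)
      (Primrec.ite (hR.comp (Primrec.fst.comp Primrec.fst) Primrec.snd)
        (Primrec.option_some.comp Primrec.snd) (Primrec.const none))
  have hspec : ∀ a n b, b ∈ g a n → R a b := by
    intro a n b h
    obtain ⟨c, -, hc⟩ := Option.bind_eq_some_iff.1 h
    split_ifs at hc with hr
    cases hc
    exact hr
  have hdom : ∀ a, (Nat.rfindOpt (g a)).Dom := by
    intro a
    obtain ⟨b, hb⟩ := hex a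
    refine Nat.rfindOpt_dom.2 ⟨Encodable.encode b, b, ?_⟩
    simp [g, hb]
  refine ⟨fun a => (Nat.rfindOpt (g a)).get (hdom a), ?_, fun a => ?_⟩
  · exact (Partrec.rfindOpt hg.to_comp).of_eq fun a => (Part.some_get (hdom a)).symm
  · obtain ⟨n, hn⟩ := Nat.rfindOpt_spec (Part.get_mem (hdom a))
    exact hspec a n _ hn

/-! ### Certificates -/

/-- The `(i, j)` entry of the matrix whose rows are the members of `A`; entries out of range
are `0`. -/
def ent (A : List (List ℤ)) (i j : ℕ) : ℤ := (A.getD i []).getD j 0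

/-- The `(i, j)` entry of the product of `A` and `B`, with inner dimension `m`. -/
def mulEnt (m : ℕ) (A B : List (List ℤ)) (i j : ℕ) : ℤ := ∑ t ∈ range m, ent A i t * ent B t j

/-- The first `k` columns of `A` are those of `P * B`. -/
def IsFactor (k : ℕ) (A P B : List (List ℤ)) : Prop :=
  ∀ i < A.length, ∀ j < k, ent A i j = mulEnt B.length P B i j

/-- `(B, P, Q, C)` certifies that the rows of `B` are a basis of the span in `ℤ^k` of the rows
of `V`, where `x = (k, V)`: all rows of `B` have length `k`, each of `B`, `V` is a left multiple of
the other, and `B * C` is diagonal with nonzero diagonal entries. -/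
def IsCert (x : ℕ × List (List ℤ))
    (c : (List (List ℤ) × List (List ℤ)) × (List (List ℤ) × List (List ℤ))) : Prop :=
  ((∀ i < c.1.1.length, (c.1.1.getD i []).length = x.1) ∧
    (∀ i < c.1.1.length, ∀ j < c.1.1.length, mulEnt x.1 c.1.1 c.2.2 i j = 0 ↔ ¬ i = j)) ∧
  (IsFactor x.1 x.2 c.1.2 c.1.1 ∧ IsFactor x.1 c.1.1 c.2.1 x.2)

theorem primrec_ent {α : Type*} [Primcodable α] {A : α → List (List ℤ)} {i j : α → ℕ}
    (hA : Primrec A) (hi : Primrec i) (hj : Primrec j) :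
    Primrec fun a => ent (A a) (i a) (j a) :=
  (Primrec.list_getD 0).comp ((Primrec.list_getD []).comp hA hi) hj

theorem primrec_mulEnt {α : Type*} [Primcodable α] {m : α → ℕ} {A B : α → List (List ℤ)}
    {i j : α → ℕ} (hm : Primrec m) (hA : Primrec A) (hB : Primrec B) (hi : Primrec i)
    (hj : Primrec j) : Primrec fun a => mulEnt (m a) (A a) (B a) (i a) (j a) :=
  primrec_sum_range hm (primrec_int_mul.comp
    (primrec_ent (hA.comp Primrec.fst) (hi.comp Primrec.fst) Primrec.snd)
    (primrec_ent (hB.comp Primrec.fst) Primrec.snd (hj.comp Primrec.fst)))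

theorem primrecPred_isFactor {α : Type*} [Primcodable α] {k : α → ℕ} {A P B : α → List (List ℤ)}
    (hk : Primrec k) (hA : Primrec A) (hP : Primrec P) (hB : Primrec B) :
    PrimrecPred fun a => IsFactor (k a) (A a) (P a) (B a) := by
  refine primrecPred_forall_lt (Primrec.list_length.comp hA) ?_
  refine PrimrecPred.primrecRel (p := fun q : α × ℕ => ∀ j < k q.1,
    ent (A q.1) q.2 j = mulEnt (B q.1).length (P q.1) (B q.1) q.2 j) ?_
  refine primrecPred_forall_lt (hk.comp Primrec.fst) ?_
  have h1 : Primrec fun q : (α × ℕ) × ℕ => q.1.1 := Primrec.fst.comp Primrec.fst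
  have h2 : Primrec fun q : (α × ℕ) × ℕ => q.1.2 := Primrec.snd.comp Primrec.fst
  exact Primrec.eq.comp (primrec_ent (hA.comp h1) h2 Primrec.snd)
    (primrec_mulEnt (Primrec.list_length.comp (hB.comp h1)) (hP.comp h1) (hB.comp h1) h2
      Primrec.snd)

theorem primrecPred_length_rows {α : Type*} [Primcodable α] {k : α → ℕ}
    {B : α → List (List ℤ)} (hk : Primrec k) (hB : Primrec B) :
    PrimrecPred fun a => ∀ i < (B a).length, ((B a).getD i []).length = k a := by
  refine primrecPred_forall_lt (Primrec.list_length.comp hB) ?_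
  refine PrimrecPred.primrecRel (p := fun q : α × ℕ => ((B q.1).getD q.2 []).length = k q.1) ?_
  exact Primrec.eq.comp (Primrec.list_length.comp
    ((Primrec.list_getD []).comp (hB.comp Primrec.fst) Primrec.snd)) (hk.comp Primrec.fst)

theorem primrecPred_diagonal {α : Type*} [Primcodable α] {k : α → ℕ} {B C : α → List (List ℤ)}
    (hk : Primrec k) (hB : Primrec B) (hC : Primrec C) :
    PrimrecPred fun a => ∀ i < (B a).length, ∀ j < (B a).length,
      mulEnt (k a) (B a) (C a) i j = 0 ↔ ¬ i = j := by
  have hlen : Primrec fun a => (B a).length := Primrec.list_length.comp hB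
  refine primrecPred_forall_lt hlen ?_
  refine PrimrecPred.primrecRel (p := fun q : α × ℕ => ∀ j < (B q.1).length,
    mulEnt (k q.1) (B q.1) (C q.1) q.2 j = 0 ↔ ¬ q.2 = j) ?_
  refine primrecPred_forall_lt (hlen.comp Primrec.fst) ?_
  have h1 : Primrec fun q : (α × ℕ) × ℕ => q.1.1 := Primrec.fst.comp Primrec.fst
  have h2 : Primrec fun q : (α × ℕ) × ℕ => q.1.2 := Primrec.snd.comp Primrec.fst
  have e1 : PrimrecPred fun q : (α × ℕ) × ℕ =>
      mulEnt (k q.1.1) (B q.1.1) (C q.1.1) q.1.2 q.2 = 0 :=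
    Primrec.eq.comp (primrec_mulEnt (hk.comp h1) (hB.comp h1) (hC.comp h1) h2 Primrec.snd)
      (Primrec.const 0)
  have e2 : PrimrecPred fun q : (α × ℕ) × ℕ => q.1.2 = q.2 := Primrec.eq.comp h2 Primrec.snd
  refine ((e1.and e2.not).or (e1.not.and e2)).of_eq fun q => ?_
  tauto

theorem IsCert.primrecRel : PrimrecRel IsCert := by
  have hk := Primrec.fst.comp (Primrec.fst (α := ℕ × List (List ℤ))
    (β := (List (List ℤ) × List (List ℤ)) × (List (List ℤ) × List (List ℤ))))
  have hV := Primrec.snd.comp (Primrec.fst (α := ℕ × List (List ℤ))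
    (β := (List (List ℤ) × List (List ℤ)) × (List (List ℤ) × List (List ℤ))))
  have h2 := Primrec.snd (α := ℕ × List (List ℤ))
    (β := (List (List ℤ) × List (List ℤ)) × (List (List ℤ) × List (List ℤ)))
  have hB := Primrec.fst.comp (Primrec.fst.comp h2)
  have hP := Primrec.snd.comp (Primrec.fst.comp h2)
  have hQ := Primrec.fst.comp (Primrec.snd.comp h2)
  have hC := Primrec.snd.comp (Primrec.snd.comp h2)
  exact PrimrecPred.primrecRel (((primrecPred_length_rows hk hB).and
    (primrecPred_diagonal hk hB hC)).and
    ((primrecPred_isFactor hk hV hP hB).and (primrecPred_isFactor hk hB hQ hV)))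

/-! ### Certificates and spans -/

theorem image_mem_eq_range (k : ℕ) (A : List (List ℤ)) :
    listToVec k '' {v | v ∈ A} = Set.range fun t : Fin A.length => listToVec k (A.get t) := by
  rw [← Set.range_list_get, ← Set.range_comp]
  rfl

theorem listToVec_get (k : ℕ) (A : List (List ℤ)) (i : Fin A.length) (j : Fin k) :
    listToVec k (A.get i) j = ent A i j := by
  simp [listToVec, ent]

theorem IsFactor.span_le {k : ℕ} {A P B : List (List ℤ)} (h : IsFactor k A P B) :
    Submodule.span ℤ (listToVec k '' {v | v ∈ A}) ≤
      Submodule.span ℤ (listToVec k '' {v | v ∈ B}) := by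
  rw [image_mem_eq_range, image_mem_eq_range, Submodule.span_le]
  rintro _ ⟨i, rfl⟩
  refine Submodule.mem_span_range_iff_exists_fun ℤ |>.2 ⟨fun t => ent P i t, ?_⟩
  ext j
  dsimp only
  rw [listToVec_get k A, h i i.2 j j.2, mulEnt, sum_range]
  simp [listToVec_get, -List.get_eq_getElem]

/-- The list of rows of a matrix. -/
def toRows {r c : ℕ} (M : Fin r → Fin c → ℤ) : List (List ℤ) :=
  List.ofFn fun i => List.ofFn (M i)

theorem length_toRows {r c : ℕ} (M : Fin r → Fin c → ℤ) : (toRows M).length = r := by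
  simp [toRows]

theorem ent_toRows {r c : ℕ} (M : Fin r → Fin c → ℤ) (i : Fin r) (j : Fin c) :
    ent (toRows M) i j = M i j := by
  simp [ent, toRows]

theorem exists_isFactor {k : ℕ} {A B : List (List ℤ)}
    (h : Submodule.span ℤ (listToVec k '' {v | v ∈ A}) ≤
      Submodule.span ℤ (listToVec k '' {v | v ∈ B})) : ∃ P, IsFactor k A P B := by
  rw [image_mem_eq_range, image_mem_eq_range, Submodule.span_le] at h
  have h' : ∀ i : Fin A.length, ∃ c : Fin B.length → ℤ,
      ∑ t, c t • listToVec k (B.get t) = listToVec k (A.get i) := fun i =>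
    Submodule.mem_span_range_iff_exists_fun ℤ |>.1 (h ⟨i, rfl⟩)
  choose M hM using h'
  refine ⟨toRows M, fun i hi j hj => ?_⟩
  have := congrFun (hM ⟨i, hi⟩) ⟨j, hj⟩
  rw [listToVec_get] at this
  rw [mulEnt, sum_range, ← this]
  simp only [Finset.sum_apply, Pi.smul_apply, listToVec_get, smul_eq_mul]
  refine sum_congr rfl fun t _ => ?_
  rw [ent_toRows M ⟨i, hi⟩ t]

theorem IsCert.linearIndependent {x : ℕ × List (List ℤ)}
    {c : (List (List ℤ) × List (List ℤ)) × (List (List ℤ) × List (List ℤ))} (h : IsCert x c) :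
    LinearIndependent ℤ (fun i : Fin c.1.1.length => listToVec x.1 (c.1.1.get i)) := by
  rw [Fintype.linearIndependent_iff]
  intro g hg i
  -- Pair the relation with the `i`-th column of `C`, which annihilates all rows but the `i`-th.
  have key : ∑ t : Fin c.1.1.length, g t * mulEnt x.1 c.1.1 c.2.2 t i = 0 := by
    have : ∀ j : Fin x.1, ∑ t : Fin c.1.1.length, g t * ent c.1.1 t j = 0 := fun j => by
      simpa [listToVec_get, -List.get_eq_getElem] using congrFun hg j
    simp only [mulEnt, sum_range, mul_sum]
    rw [sum_comm]
    refine sum_eq_zero fun j _ => ?_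
    simp only [← mul_assoc]
    rw [← sum_mul, this, zero_mul]
  rw [sum_eq_single i] at key
  · refine (mul_eq_zero.1 key).resolve_right fun h0 => ?_
    exact (h.1.2 i i.2 i i.2).1 h0 rfl
  · intro t _ hti
    rw [(h.1.2 t t.2 i i.2).2 fun e => hti (Fin.ext e), mul_zero]
  · simp

theorem exists_isCert (x : ℕ × List (List ℤ)) : ∃ c, IsCert x c := by
  obtain ⟨k, V⟩ := x
  obtain ⟨n, ⟨bM, bN, f, a, snf⟩⟩ := Submodule.smithNormalForm (Pi.basisFun ℤ (Fin k))
    (Submodule.span ℤ (listToVec k '' {v | v ∈ V}))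
  have ha : ∀ i, a i ≠ 0 := fun i h0 => bN.ne_zero i <| by
    ext1
    rw [snf, h0, zero_smul]
    rfl
  let B := toRows fun i j => (bN i : Fin k → ℤ) j
  let C := toRows fun (j : Fin k) i => bM.coord (f i) (Pi.single j 1)
  have hBlen : B.length = n := length_toRows _
  have hspan : Submodule.span ℤ (listToVec k '' {v | v ∈ B}) =
      Submodule.span ℤ (listToVec k '' {v | v ∈ V}) := by
    have hr : listToVec k '' {v | v ∈ B} = Set.range fun i => (bN i : Fin k → ℤ) := by
      have hB : {v | v ∈ B} = Set.range fun i => List.ofFn (bN i : Fin k → ℤ) := by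
        ext v
        simp [B, toRows, List.mem_ofFn]
      rw [hB, ← Set.range_comp]
      congr 1
      ext i j
      simp [listToVec]
    have := congrArg (Submodule.map (Submodule.subtype _)) bN.span_eq
    rw [Submodule.map_span, Submodule.map_top, Submodule.range_subtype, ← Set.range_comp] at this
    rw [hr]
    exact this
  obtain ⟨P, hP⟩ := exists_isFactor hspan.ge
  obtain ⟨Q, hQ⟩ := exists_isFactor hspan.le
  refine ⟨((B, P), (Q, C)), ⟨fun i hi => ?_, fun i hi j hj => ?_⟩, hP, hQ⟩
  · have hi' : i < n := hBlen ▸ hi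
    simp [B, toRows, hi']
  · dsimp only at hi hj ⊢
    rw [hBlen] at hi hj
    have : mulEnt k B C i j = bM.coord (f ⟨j, hj⟩) (bN ⟨i, hi⟩ : Fin k → ℤ) := by
      conv_rhs => rw [pi_eq_sum_univ' (bN ⟨i, hi⟩ : Fin k → ℤ)]
      rw [mulEnt, sum_range, map_sum]
      refine sum_congr rfl fun t _ => ?_
      rw [ent_toRows _ ⟨i, hi⟩ t, ent_toRows _ t ⟨j, hj⟩, map_smul, smul_eq_mul]
    rw [this, snf, map_smul, bM.coord_apply, bM.repr_self, Finsupp.single_apply]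
    simp [ha]

/-- There is a computable function which, given `k` and a finite list of vectors in `ℤ^k`
(encoded as length-`k` lists of integers), outputs a finite list of vectors in `ℤ^k` forming
a `ℤ`-linearly independent family whose `ℤ`-span equals the `ℤ`-span of the input vectors. -/
theorem stmt13 :
    ∃ F : ℕ × List (List ℤ) → List (List ℤ), Computable F ∧
      ∀ (k : ℕ) (vs : List (List ℤ)), (∀ v ∈ vs, v.length = k) →
        (∀ b ∈ F (k, vs), b.length = k) ∧
        LinearIndependent ℤ (fun i : Fin (F (k, vs)).length => listToVec k ((F (k, vs)).get i)) ∧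
        Submodule.span ℤ (listToVec k '' {v | v ∈ F (k, vs)}) =
          Submodule.span ℤ (listToVec k '' {v | v ∈ vs}) := by
  obtain ⟨G, hG, hcert⟩ := exists_computable_choice IsCert.primrecRel exists_isCert
  refine ⟨fun x => (G x).1.1, (Primrec.fst.comp Primrec.fst).to_comp.comp hG, fun k vs _ => ?_⟩
  have h := hcert (k, vs)
  refine ⟨fun b hb => ?_, h.linearIndependent, le_antisymm h.2.2.span_le h.2.1.span_le⟩
  obtain ⟨i, hi, rfl⟩ := List.getElem_of_mem hb
  rw [← List.getD_eq_getElem _ [] hi]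
  exact h.1.1 i hi
end

section
/- Let G be a nontrivial torsion-free abelian group (written additively), let e and m be natural numbers, let L be an e × m integer matrix every row of which is nonzero, and let g ∈ G^e. Then there exists w ∈ G^m such that (L·w)_i ≠ g_i for every index i ∈ {1,…,e}, where L acts on w via ℤ-scalar multiplication. -/
/-!
Fix `x ≠ 0` in `G` and search for `w` on the moment curve `w j = t ^ (j + 1) • x`, `t : ℤ`.
Then `(L · w) i = Pᵢ(t) • x`, where `Pᵢ = ∑ j, L i j * X ^ (j + 1)`. Since row `i` is nonzero and
`Pᵢ` has no constant term, `Pᵢ` is a nonconstant polynomial. As `G` is torsion-free, `n ↦ n • x`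
is injective, so all `t` with `Pᵢ(t) • x = g i` share the same value of `Pᵢ`; hence there are only
finitely many of them (`finite_bad_parameters`). Finitely many rows exclude finitely many integers,
and any remaining `t` works.
-/

open scoped BigOperators

open Polynomial in
/-- If `s` is one solution, every solution is a root of the nonzero polynomial `p - C (p.eval s)`,
where `p = ∑ j, a j * X ^ (j + 1)`. -/
theorem finite_bad_parameters {G : Type*} [AddCommGroup G]
    (htf : ∀ (n : ℤ) (g : G), n • g = 0 → n = 0 ∨ g = 0)
    {x : G} (hx : x ≠ 0) {m : ℕ} (a : Fin m → ℤ) (ha : ∃ j, a j ≠ 0) (g : G) :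
    {t : ℤ | ∑ j, a j • t ^ (j.val + 1) • x = g}.Finite := by
  rcases Set.eq_empty_or_nonempty {t : ℤ | ∑ j, a j • t ^ (j.val + 1) • x = g} with h | ⟨s, hs⟩
  · rw [h]
    exact Set.finite_empty
  set p : ℤ[X] := ∑ j, C (a j) * X ^ (j.val + 1) with hp
  have heval : ∀ t : ℤ, p.eval t • x = ∑ j, a j • t ^ (j.val + 1) • x := by
    intro t
    simp [hp, eval_finsetSum, Finset.sum_smul, mul_smul]
  -- Comparing coefficients of `X ^ (j + 1)`, which the constant `C (p.eval s)` does not affect.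
  have hne : p - C (p.eval s) ≠ 0 := by
    obtain ⟨j, hj⟩ := ha
    intro h0
    have hc := congrArg (fun q => coeff q (j.val + 1)) h0
    simp only [hp, coeff_sub, finsetSum_coeff, coeff_C_mul, coeff_X_pow, coeff_C_succ,
      coeff_zero, sub_zero, Nat.add_right_cancel_iff, Fin.val_inj, mul_ite, mul_one, mul_zero,
      Finset.sum_ite_eq, Finset.mem_univ, if_true] at hc
    exact hj hc
  refine (p - C (p.eval s)).roots.toFinset.finite_toSet.subset fun t ht => ?_
  have hz : (p.eval t - p.eval s) • x = 0 := by
    rw [sub_smul, heval, heval, show _ = g from ht, show _ = g from hs, sub_self]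
  have hroot : (p - C (p.eval s)).IsRoot t := by
    rw [IsRoot.def, eval_sub, eval_C]
    exact (htf _ _ hz).resolve_right hx
  exact Multiset.mem_toFinset.mpr ((mem_roots hne).mpr hroot)

/-- If `G` is a nontrivial torsion-free abelian group, `L` is an integer matrix all of whose
rows are nonzero, and `g` is a tuple from `G`, then there is a tuple `w` with
`(L·w)ᵢ ≠ gᵢ` for every `i`. -/
theorem stmt15 {G : Type*} [AddCommGroup G]
    (hnt : ∃ g : G, g ≠ 0)
    (htf : ∀ (n : ℤ) (g : G), n • g = 0 → n = 0 ∨ g = 0)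
    (e m : ℕ) (L : Matrix (Fin e) (Fin m) ℤ)
    (hrows : ∀ i, ∃ j, L i j ≠ 0)
    (g : Fin e → G) :
    ∃ w : Fin m → G, ∀ i, intMatVec L w i ≠ g i := by
  obtain ⟨x, hx⟩ := hnt
  have hfin := Set.finite_iUnion fun i => finite_bad_parameters htf hx (L i) (hrows i) (g i)
  obtain ⟨t, ht⟩ := hfin.exists_notMem
  exact ⟨fun j => t ^ (j.val + 1) • x, fun i hi => ht (Set.mem_iUnion.mpr ⟨i, hi⟩)⟩
end

section
/- Let L and L' be linear orders such that every element of L has an immediate successor and an immediate predecessor. Let f : L → L' be an order embedding such that: (i) whenever y is the immediate successor of x in L, the open interval between f(x) and f(y) in L' is finite; and (ii) for every z ∈ L' there exists x ∈ L such that the closed interval in L' with endpoints z and f(x) is finite. Then L and L' are order isomorphic. -/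
/-!
In a linear order where every element has an immediate successor and an immediate predecessor,
the successor map is an order automorphism `e` (`exists_succ_iso`), and two elements are at finite
distance iff they lie in the same orbit of the powers `e ^ n`, `n : ℤ`
(`finite_uIcc_iff`); each orbit is a convex copy of `ℤ`.

The hypotheses on `f` force `L'` to have immediate successors and predecessors too: an element `z`
is at finite distance from some `f x`, and the strictly increasing sequence `f (e ^ k x)`, whose
steps are finite, must eventually pass `z` (`exists_covBy_of_seq`). So `L'` also carries a
successor automorphism `e'`. As `f` is an embedding, `x` and `y` lie in one orbit of `e` iff
`f x` and `f y` lie in one orbit of `e'`, and by (ii) every orbit of `e'` meets the image of `f`.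
Choosing a representative `r` in each orbit of `e`, the map `e ^ n r ↦ e' ^ n (f r)` is the
required isomorphism: it is increasing inside each orbit, and distinct orbits are ordered in the
same way as their representatives (`zpow_lt_zpow_of_not_orbit`).
-/

/-- `y` is the immediate successor of `x` in a linear order. -/
def ImmSucc {α : Type*} [LinearOrder α] (x y : α) : Prop :=
  x < y ∧ ¬∃ z, x < z ∧ z < y

theorem immSucc_iff_covBy {γ : Type*} [LinearOrder γ] {x y : γ} : ImmSucc x y ↔ x ⋖ y := by
  simp [ImmSucc, CovBy]

theorem exists_succ_iso {γ : Type*} [LinearOrder γ] (hs : ∀ x : γ, ∃ y, x ⋖ y)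
    (hp : ∀ x : γ, ∃ y, y ⋖ x) : ∃ e : γ ≃o γ, ∀ a, a ⋖ e a := by
  choose s hs using hs
  choose p hp using hp
  have hmono : StrictMono s := fun a b hab => ((hs a).ge_of_gt hab).trans_lt (hs b).lt
  have hsurj : Function.Surjective s := fun a => ⟨p a, (hs (p a)).unique_right (hp a)⟩
  exact ⟨hmono.orderIsoOfSurjective s hsurj, fun a => hs a⟩

section SuccIso

variable {γ : Type*} [LinearOrder γ] {e : γ ≃o γ}

theorem zpow_add_one_apply (n : ℤ) (a : γ) : (e ^ (n + 1)) a = e ((e ^ n) a) := by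
  rw [add_comm, zpow_add, zpow_one]; rfl

theorem zpow_add_apply (m n : ℤ) (a : γ) : (e ^ (m + n)) a = (e ^ m) ((e ^ n) a) := by
  rw [zpow_add]; rfl

theorem zpow_zero_apply (a : γ) : (e ^ (0 : ℤ)) a = a := by
  rw [zpow_zero]; rfl

theorem zpow_neg_apply_zpow (n : ℤ) (a : γ) : (e ^ (-n)) ((e ^ n) a) = a := by
  rw [← zpow_add_apply, neg_add_cancel, zpow_zero_apply]

theorem strictMono_zpow_apply (he : ∀ a, a ⋖ e a) (a : γ) :
    StrictMono fun n : ℤ => (e ^ n) a :=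
  strictMono_int_of_lt_succ fun n => by
    rw [zpow_add_one_apply]; exact (he _).lt

/-- The orbit equivalence relation of the powers of `e`. -/
def orbitSetoid (e : γ ≃o γ) : Setoid γ where
  r a b := ∃ n : ℤ, (e ^ n) a = b
  iseqv :=
    { refl := fun a => ⟨0, zpow_zero_apply a⟩
      symm := by
        rintro a _ ⟨n, rfl⟩
        exact ⟨-n, zpow_neg_apply_zpow n a⟩
      trans := by
        rintro a _ _ ⟨n, rfl⟩ ⟨m, rfl⟩
        exact ⟨m + n, zpow_add_apply m n a⟩ }

theorem finite_Icc_pow (he : ∀ a, a ⋖ e a) (a : γ) (k : ℕ) :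
    (Set.Icc a ((e ^ (k : ℤ)) a)).Finite := by
  induction k with
  | zero => simp
  | succ k ih =>
    refine (ih.insert ((e ^ ((k + 1 : ℕ) : ℤ)) a)).subset ?_
    rintro z ⟨hz, hz'⟩
    rcases hz'.eq_or_lt with h | h
    · exact Or.inl h
    · refine Or.inr ⟨hz, ?_⟩
      push_cast at h
      rw [zpow_add_one_apply] at h
      exact (he _).le_of_lt h

theorem exists_zpow_of_finite_Icc (he : ∀ a, a ⋖ e a) {a b : γ} (hab : a ≤ b)
    (h : (Set.Icc a b).Finite) : ∃ n : ℤ, (e ^ n) a = b := by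
  by_contra! hne
  -- Otherwise all the points `e ^ k a` stay below `b`, and there are infinitely many of them.
  have hle : ∀ k : ℕ, (e ^ (k : ℤ)) a < b := by
    intro k
    induction k with
    | zero => exact lt_of_le_of_ne (by simpa using hab) (hne _)
    | succ k ih =>
      refine lt_of_le_of_ne ?_ (hne _)
      push_cast
      rw [zpow_add_one_apply]
      exact (he _).ge_of_gt ih
  have hmono := (strictMono_zpow_apply he a).comp Nat.strictMono_cast
  refine Set.infinite_of_injective_forall_mem (s := Set.Icc a b) hmono.injective
    (fun k => Set.mem_Icc.2 ⟨?_, (hle k).le⟩) h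
  simpa using hmono.monotone (Nat.zero_le k)

theorem finite_uIcc_iff (he : ∀ a, a ⋖ e a) (a b : γ) :
    (Set.uIcc a b).Finite ↔ orbitSetoid e a b := by
  constructor
  · intro h
    rcases le_total a b with hab | hab
    · rw [Set.uIcc_of_le hab] at h
      exact exists_zpow_of_finite_Icc he hab h
    · rw [Set.uIcc_of_ge hab] at h
      exact (orbitSetoid e).symm (exists_zpow_of_finite_Icc he hab h)
  · rintro ⟨n, rfl⟩
    obtain ⟨k, rfl | rfl⟩ := n.eq_nat_or_neg
    · have h := (strictMono_zpow_apply he a).monotone (Int.natCast_nonneg k)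
      rw [Set.uIcc_of_le (by simpa using h)]
      exact finite_Icc_pow he a k
    · have h := (strictMono_zpow_apply he a).monotone (Int.neg_natCast_le_natCast k 0)
      rw [Set.uIcc_of_ge (by simpa using h)]
      have := finite_Icc_pow he ((e ^ (-(k : ℤ))) a) k
      rwa [← zpow_add_apply, add_neg_cancel, zpow_zero_apply] at this

/-- Distinct orbits are ordered in the same way as any of their elements. -/
theorem zpow_lt_zpow_of_not_orbit (he : ∀ a, a ⋖ e a) {a b : γ} (hab : a < b)
    (h : ¬ orbitSetoid e a b) (n m : ℤ) : (e ^ n) a < (e ^ m) b := by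
  have key : ∀ k : ℤ, a < (e ^ k) b := by
    intro k
    by_contra! hk
    -- `a` then lies between two points of the orbit of `b`, whose intervals are finite.
    have hfin : (Set.uIcc ((e ^ k) b) b).Finite :=
      (finite_uIcc_iff he _ _).2 ((orbitSetoid e).symm ⟨k, rfl⟩)
    refine h ((finite_uIcc_iff he _ _).1 (hfin.subset ?_))
    rw [Set.uIcc_of_le hab.le, Set.uIcc_of_le (hk.trans hab.le)]
    exact Set.Icc_subset_Icc_left hk
  have := (e ^ n).strictMono (key (m - n))
  rwa [← zpow_add_apply, add_sub_cancel] at this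

end SuccIso

theorem finite_uIcc_trans {γ : Type*} [LinearOrder γ] {a b c : γ} (h : (Set.uIcc a b).Finite)
    (h' : (Set.uIcc b c).Finite) : (Set.uIcc a c).Finite :=
  (h.union h').subset Set.uIcc_subset_uIcc_union_uIcc

/-- An element at finite distance from the start of an increasing sequence with finite steps has
an immediate successor, since the sequence passes it at a finite distance. -/
theorem exists_covBy_of_seq {γ : Type*} [LinearOrder γ] (u : ℕ → γ) (hu : StrictMono u)
    (hstep : ∀ k, (Set.uIcc (u k) (u (k + 1))).Finite) (z : γ)
    (hz : (Set.uIcc z (u 0)).Finite) : ∃ w, z ⋖ w := by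
  have hfin : ∀ k, (Set.uIcc z (u k)).Finite := by
    intro k
    induction k with
    | zero => exact hz
    | succ k ih => exact finite_uIcc_trans ih (hstep k)
  obtain ⟨k, hk⟩ : ∃ k, z < u k := by
    by_contra! hle
    refine Set.infinite_of_injective_forall_mem hu.injective (fun k => ?_) hz
    rw [Set.uIcc_of_ge (hle 0)]
    exact ⟨hu.monotone (Nat.zero_le k), hle k⟩
  have hI : (Set.Ioc z (u k)).Finite :=
    (hfin k).subset (Set.Ioc_subset_Icc_self.trans Set.Icc_subset_uIcc)
  obtain ⟨w, hw⟩ := hI.exists_minimal ⟨u k, hk, le_rfl⟩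
  refine ⟨w, hw.prop.1, fun c hzc hcw => ?_⟩
  exact (hw.le_of_le ⟨hzc, hcw.le.trans hw.prop.2⟩ hcw.le).not_gt hcw

/-- Let `L`, `L'` be linear orders such that every element of `L` has an immediate successor
and an immediate predecessor.  If `f : L → L'` is an order embedding such that (i) whenever
`y` is the immediate successor of `x`, the open interval `(f x, f y)` in `L'` is finite, and
(ii) every `z ∈ L'` is at finite (closed-interval) distance from some `f x`, then `L` and
`L'` are order isomorphic. -/
theorem stmt16 {α β : Type*} [LinearOrder α] [LinearOrder β]
    (hsucc : ∀ x : α, ∃ y, ImmSucc x y)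
    (hpred : ∀ x : α, ∃ y, ImmSucc y x)
    (f : α ↪o β)
    (h1 : ∀ x y : α, ImmSucc x y → (Set.Ioo (f x) (f y)).Finite)
    (h2 : ∀ z : β, ∃ x : α, (Set.uIcc z (f x)).Finite) :
    Nonempty (α ≃o β) := by
  simp only [immSucc_iff_covBy] at hsucc hpred h1
  obtain ⟨e, he⟩ := exists_succ_iso hsucc hpred
  have hstep : ∀ x, (Set.uIcc (f x) (f (e x))).Finite := by
    intro x
    have hlt : f x < f (e x) := f.strictMono (he x).lt
    rw [Set.uIcc_of_le hlt.le, ← Set.Ioo_union_both hlt.le]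
    exact (h1 _ _ (he x)).union (Set.toFinite _)
  have hS : ∀ z : β, ∃ w, z ⋖ w := by
    intro z
    obtain ⟨x, hx⟩ := h2 z
    refine exists_covBy_of_seq (fun k : ℕ => f ((e ^ (k : ℤ)) x))
      (f.strictMono.comp ((strictMono_zpow_apply he x).comp Nat.strictMono_cast)) ?_ z
      (by simpa using hx)
    intro k
    push_cast
    rw [zpow_add_one_apply]
    exact hstep _
  have hP : ∀ z : β, ∃ w, w ⋖ z := by
    intro z
    obtain ⟨x, hx⟩ := h2 z
    -- The increasing sequence in the dual order is the decreasing sequence `f (e ^ (-k) x)`.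
    obtain ⟨w, hw⟩ := exists_covBy_of_seq
      (fun k : ℕ => OrderDual.toDual (f ((e ^ (-(k : ℤ))) x)))
      (fun i j hij => OrderDual.toDual_lt_toDual.2
        (f.strictMono (strictMono_zpow_apply he x (by simpa using hij))))
      (fun k => by
        have h := hstep ((e ^ (-((k + 1 : ℕ) : ℤ))) x)
        rw [← zpow_add_one_apply, Set.uIcc_comm] at h
        rw [Set.uIcc_toDual]
        have hk : -((k + 1 : ℕ) : ℤ) + 1 = -(k : ℤ) := by push_cast; ring
        rw [hk] at h
        exact h)
      (OrderDual.toDual z) (by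
        rw [Set.uIcc_toDual]
        have h0 : (e ^ (-((0 : ℕ) : ℤ))) x = x := by simp
        rw [h0]
        exact hx)
    exact ⟨OrderDual.ofDual w, hw.ofDual⟩
  obtain ⟨e', he'⟩ := exists_succ_iso hS hP
  -- `f` preserves and reflects the orbit relation.
  have hfwd : ∀ x y, orbitSetoid e x y → orbitSetoid e' (f x) (f y) := by
    have hnat : ∀ (k : ℕ) x, orbitSetoid e' (f x) (f ((e ^ (k : ℤ)) x)) := by
      intro k x
      rw [← finite_uIcc_iff he']
      induction k with
      | zero => simp
      | succ k ih =>
        refine finite_uIcc_trans ih ?_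
        push_cast
        rw [zpow_add_one_apply]
        exact hstep _
    rintro x _ ⟨n, rfl⟩
    obtain ⟨k, rfl | rfl⟩ := n.eq_nat_or_neg
    · exact hnat k x
    · have := hnat k ((e ^ (-(k : ℤ))) x)
      rw [← zpow_add_apply, add_neg_cancel, zpow_zero_apply] at this
      exact (orbitSetoid e').symm this
  have hbwd : ∀ x y, orbitSetoid e' (f x) (f y) → orbitSetoid e x y := by
    intro x y h
    rw [← finite_uIcc_iff he'] at h
    rw [← finite_uIcc_iff he]
    refine (h.preimage f.injective.injOn).subset fun z hz => ?_
    exact f.monotone.mapsTo_uIcc hz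
  let r : α → α := fun x => (Quotient.mk (orbitSetoid e) x).out
  have hr : ∀ x, orbitSetoid e (r x) x := fun x => Quotient.mk_out (s := orbitSetoid e) x
  have hr_eq : ∀ x y, orbitSetoid e x y → r x = r y := fun x y h =>
    congrArg Quotient.out (Quotient.sound (s := orbitSetoid e) h)
  have hr_orb : ∀ x y, orbitSetoid e (r x) (r y) → r x = r y := fun x y h =>
    hr_eq x y ((orbitSetoid e).trans ((orbitSetoid e).symm (hr x))
      ((orbitSetoid e).trans h (hr y)))
  choose n hn using hr
  have hmono : StrictMono fun x => (e' ^ n x) (f (r x)) := by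
    intro x y hxy
    rw [← hn x, ← hn y] at hxy
    by_cases hrr : r x = r y
    · rw [hrr] at hxy
      have hlt := (strictMono_zpow_apply he (r y)).lt_iff_lt.1 hxy
      simp only [hrr]
      exact strictMono_zpow_apply he' _ hlt
    · have hlt : r x < r y := by
        by_contra! hle
        exact (zpow_lt_zpow_of_not_orbit he (lt_of_le_of_ne hle (Ne.symm hrr))
          (fun h => hrr (hr_orb y x h).symm) (n y) (n x)).not_gt hxy
      exact zpow_lt_zpow_of_not_orbit he' (f.strictMono hlt)
        (fun h => hrr (hr_orb x y (hbwd _ _ h))) _ _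
  have hsurj : Function.Surjective fun x => (e' ^ n x) (f (r x)) := by
    intro z
    obtain ⟨x, hx⟩ := h2 z
    rw [finite_uIcc_iff he'] at hx
    obtain ⟨m, hm⟩ := (orbitSetoid e').trans (hfwd _ _ ⟨n x, hn x⟩) ((orbitSetoid e').symm hx)
    refine ⟨(e ^ m) (r x), ?_⟩
    have hrx : r ((e ^ m) (r x)) = r x :=
      hr_eq _ _ ((orbitSetoid e).trans ((orbitSetoid e).symm ⟨m, rfl⟩) ⟨n x, hn x⟩)
    have hnm : n ((e ^ m) (r x)) = m := by
      have := hn ((e ^ m) (r x))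
      rw [hrx] at this
      exact (strictMono_zpow_apply he (r x)).injective this
    simp only [hrx, hnm]
    exact hm
  exact ⟨hmono.orderIsoOfSurjective _ hsurj⟩
end

section
/- Let ≈ be an equivalence relation on a set E having infinitely many infinite equivalence classes. Let k, m be natural numbers, let x : Fin k → E be injective, and let ρ be an equivalence relation on Fin (k+m) such that for all i, j < k: ρ(i,j) holds if and only if x(i) ≈ x(j). Then the following are equivalent: (a) there exists y : Fin m → E such that the combined map z : Fin (k+m) → E (equal to x on the first k indices and to y on the last m) is injective and satisfies, for all i, j: ρ(i,j) if and only if z(i) ≈ z(j); (b) for every i < k, the ≈-equivalence class of x(i) contains at least as many elements as the (finite) ρ-equivalence class of i in Fin (k+m). -/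
/-!
The forward direction restricts `z` to a `ρ`-class. Conversely, a realization of `ρ` on a set `S`
of indices can be extended one index at a time (`PartialRealization.insert`), provided every
`ρ`-class meeting `S` fits into the `r`-class it is sent to. If the new index is equivalent to some
`i ∈ S`, then `z` has used strictly fewer than `|[i]_ρ|` points of the class of `z i`, so a fresh
point remains there; otherwise only finitely many `r`-classes have been used, so a fresh infinite
class is available, and an infinite class has room for the finite `ρ`-class of the new index.
-/

/-- `z` realizes `ρ` through `r` on the index set `S` (its values outside `S` are irrelevant), and
each `ρ`-class meeting `S`, counted in the whole index type, has at most as many elements as the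
`r`-class it is sent to. -/
structure PartialRealization {E ι : Type*} (r : E → E → Prop) (ρ : ι → ι → Prop)
    (S : Set ι) (z : ι → E) : Prop where
  injOn : Set.InjOn z S
  rel_iff : ∀ i ∈ S, ∀ j ∈ S, ρ i j ↔ r (z i) (z j)
  encard_le : ∀ i ∈ S, {j | ρ i j}.encard ≤ {b | r (z i) b}.encard

/-- The point at which the new index `a` is placed must be unused, in the classes prescribed by
`ρ`, and in a large enough class. -/
theorem PartialRealization.exists_point {E ι : Type*} [Finite ι] {r : E → E → Prop}
    (hr : Equivalence r)
    (hinf : {C : Set E | (∃ a, C = {b | r a b}) ∧ C.Infinite}.Infinite)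
    {ρ : ι → ι → Prop} (hρ : Equivalence ρ) {S : Set ι} {z : ι → E}
    (hz : PartialRealization r ρ S z) {a : ι} (ha : a ∉ S) :
    ∃ b, b ∉ z '' S ∧ (∀ i ∈ S, ρ i a ↔ r (z i) b) ∧
      {j | ρ a j}.encard ≤ {c | r b c}.encard := by
  by_cases h : ∃ i ∈ S, ρ i a
  · obtain ⟨i, hi, hia⟩ := h
    have hlt : (z '' (S ∩ {j | ρ i j})).encard < {b | r (z i) b}.encard :=
      (Set.encard_image_le _ _).trans_lt <|
        ((Set.toFinite _).encard_lt_encard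
          ⟨Set.inter_subset_right, fun hsub => ha (hsub hia).1⟩).trans_le (hz.encard_le i hi)
    obtain ⟨b, hb, hbz⟩ := Set.not_subset.1 fun hsub => hlt.not_ge (Set.encard_le_encard hsub)
    refine ⟨b, ?_, fun j hj => ⟨fun hja => ?_, fun hjb => ?_⟩, ?_⟩
    · rintro ⟨j, hj, rfl⟩
      exact hbz ⟨j, ⟨hj, (hz.rel_iff i hi j hj).2 hb⟩, rfl⟩
    · exact hr.trans ((hz.rel_iff j hj i hi).1 (hρ.trans hja (hρ.symm hia))) hb
    · exact hρ.trans ((hz.rel_iff j hj i hi).2 (hr.trans hjb (hr.symm hb))) hia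
    · have h1 : {j | ρ a j} = {j | ρ i j} :=
        Set.ext fun j => ⟨fun h => hρ.trans hia h, fun h => hρ.trans (hρ.symm hia) h⟩
      have h2 : {c | r b c} = {c | r (z i) c} :=
        Set.ext fun c => ⟨fun h => hr.trans hb h, fun h => hr.trans (hr.symm hb) h⟩
      rw [h1, h2]
      exact hz.encard_le i hi
  · obtain ⟨_, ⟨⟨b, rfl⟩, hC⟩, hCS⟩ :=
      hinf.exists_notMem_finite ((Set.toFinite S).image fun i => {c | r (z i) c})
    have hnot : ∀ i ∈ S, ¬ r (z i) b := fun i hi hib => hCS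
      ⟨i, hi, Set.ext fun c => ⟨fun h => hr.trans (hr.symm hib) h, fun h => hr.trans hib h⟩⟩
    refine ⟨b, ?_, fun i hi => ⟨fun hia => (h ⟨i, hi, hia⟩).elim, fun hib => (hnot i hi hib).elim⟩,
      ?_⟩
    · rintro ⟨i, hi, rfl⟩
      exact hnot i hi (hr.refl _)
    · rw [hC.encard_eq]
      exact le_top

theorem PartialRealization.insert {E ι : Type*} [Finite ι] {r : E → E → Prop}
    (hr : Equivalence r)
    (hinf : {C : Set E | (∃ a, C = {b | r a b}) ∧ C.Infinite}.Infinite)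
    {ρ : ι → ι → Prop} (hρ : Equivalence ρ) {S : Set ι} {z : ι → E}
    (hz : PartialRealization r ρ S z) (a : ι) :
    ∃ z', Set.EqOn z' z S ∧ PartialRealization r ρ (insert a S) z' := by
  classical
  by_cases ha : a ∈ S
  · exact ⟨z, fun _ _ => rfl, by rwa [Set.insert_eq_of_mem ha]⟩
  obtain ⟨b, hbz, hrel, hcard⟩ := hz.exists_point hr hinf hρ ha
  have heq : Set.EqOn (Function.update z a b) z S := fun i hi =>
    Function.update_of_ne (ne_of_mem_of_not_mem hi ha) _ _
  have hself : Function.update z a b a = b := Function.update_self ..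
  refine ⟨_, heq, ?_, ?_, ?_⟩
  · rw [Set.injOn_insert ha, heq.image_eq, hself]
    exact ⟨hz.injOn.congr heq.symm, hbz⟩
  · rintro i (rfl | hi) j (rfl | hj)
    · exact iff_of_true (hρ.refl _) (hr.refl _)
    · rw [hself, heq hj]
      exact ⟨fun h => hr.symm ((hrel j hj).1 (hρ.symm h)),
        fun h => hρ.symm ((hrel j hj).2 (hr.symm h))⟩
    · rw [hself, heq hi]
      exact hrel i hi
    · rw [heq hi, heq hj]
      exact hz.rel_iff i hi j hj
  · rintro i (rfl | hi)
    · rwa [hself]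
    · rw [heq hi]
      exact hz.encard_le i hi

theorem PartialRealization.exists_univ {E ι : Type*} [Finite ι] {r : E → E → Prop}
    (hr : Equivalence r)
    (hinf : {C : Set E | (∃ a, C = {b | r a b}) ∧ C.Infinite}.Infinite)
    {ρ : ι → ι → Prop} (hρ : Equivalence ρ) {S : Set ι} {z : ι → E}
    (hz : PartialRealization r ρ S z) :
    ∃ z', Set.EqOn z' z S ∧ PartialRealization r ρ Set.univ z' := by
  suffices h : ∀ T : Set ι, T.Finite →
      ∃ z', Set.EqOn z' z S ∧ PartialRealization r ρ (T ∪ S) z' by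
    simpa using h Set.univ Set.finite_univ
  intro T hT
  induction T, hT using Set.Finite.induction_on with
  | empty => exact ⟨z, fun _ _ => rfl, by simpa using hz⟩
  | @insert a T _ _ ih =>
    obtain ⟨z₁, h₁, hz₁⟩ := ih
    obtain ⟨z₂, h₂, hz₂⟩ := hz₁.insert hr hinf hρ a
    exact ⟨z₂, (h₂.mono Set.subset_union_right).trans h₁, by rwa [Set.insert_union]⟩


/-- Let `r` be an equivalence relation on a set `E` having infinitely many infinite
equivalence classes.  Let `x : Fin k → E` be injective and let `ρ` be an equivalence
relation on `Fin (k+m)` agreeing with `r` on the first `k` indices (via `x`).  Then `x`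
extends to a tuple `z = x ⌢ y : Fin (k+m) → E`, injective and realizing `ρ` via `r`, if and
only if for every `i < k` the `ρ`-class of `i` embeds into (i.e. has cardinality at most
that of) the `r`-class of `x i`. -/
theorem stmt17 {E : Type*} (r : E → E → Prop) (hr : Equivalence r)
    (hinf : {C : Set E | (∃ a, C = {b | r a b}) ∧ C.Infinite}.Infinite)
    (k m : ℕ) (x : Fin k → E) (hx : Function.Injective x)
    (ρ : Fin (k + m) → Fin (k + m) → Prop) (hρ : Equivalence ρ)
    (hcompat : ∀ i j : Fin k, ρ (Fin.castAdd m i) (Fin.castAdd m j) ↔ r (x i) (x j)) :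
    (∃ y : Fin m → E, Function.Injective (Fin.append x y) ∧
        ∀ i j : Fin (k + m), ρ i j ↔ r (Fin.append x y i) (Fin.append x y j)) ↔
      (∀ i : Fin k,
        Nonempty ({j : Fin (k + m) // ρ (Fin.castAdd m i) j} ↪ {b : E // r (x i) b})) := by
  constructor
  · rintro ⟨y, hinj, hrel⟩ i
    refine ⟨⟨fun j => ⟨Fin.append x y j, ?_⟩, fun j j' h => Subtype.ext (hinj ?_)⟩⟩
    · simpa using (hrel (Fin.castAdd m i) j).1 j.2
    · exact congrArg Subtype.val h
  · intro hemb
    -- Only used to give `z` arbitrary values on the last `m` indices.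
    obtain ⟨_, ⟨e, -⟩, -⟩ := hinf.nonempty
    have hz : PartialRealization r ρ (Set.range (Fin.castAdd m)) (Fin.append x fun _ => e) := by
      refine ⟨?_, ?_, ?_⟩
      · rintro _ ⟨i, rfl⟩ _ ⟨j, rfl⟩ h
        simp only [Fin.append_left] at h
        rw [hx h]
      · rintro _ ⟨i, rfl⟩ _ ⟨j, rfl⟩
        simpa using hcompat i j
      · rintro _ ⟨i, rfl⟩
        obtain ⟨f⟩ := hemb i
        simp only [Fin.append_left]
        exact Function.Embedding.encard_le f
    obtain ⟨z, hzx, hz⟩ := hz.exists_univ hr hinf hρ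
    have hzeq : Fin.append x (fun j => z (Fin.natAdd k j)) = z := by
      funext i
      refine Fin.addCases (fun i => ?_) (fun j => ?_) i
      · rw [hzx ⟨i, rfl⟩, Fin.append_left, Fin.append_left]
      · rw [Fin.append_right]
    refine ⟨fun j => z (Fin.natAdd k j), ?_⟩
    rw [hzeq]
    exact ⟨Set.injOn_univ.1 hz.injOn, fun i j => hz.rel_iff i trivial j trivial⟩
end

section
/- Let T be an infinite tree (a nonempty, prefix-closed set of finite sequences of natural numbers) in which every node is either a leaf or has infinitely many children, of which only finitely many are leaves. Then for every finite subset F of T and every N ≥ 1, there exists a node τ ∈ T of length exactly N such that τ is not a leaf and, for every nonempty σ ∈ F, the first entries of τ and σ differ (equivalently, the only common ancestor of τ and any element of F is the root). -/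
/-!
The root is not a leaf, since otherwise the tree would consist of the root alone. A non-leaf has
infinitely many non-leaf children, hence one whose last entry avoids any prescribed finite set
(`exists_nonleaf_child`). Apply this at the root to avoid all first entries of elements of `F`,
then extend through non-leaf children up to length `N`; extensions keep the first entry.
-/

/-- A tree: a nonempty set of finite sequences of naturals closed under prefixes. -/
def IsTree (T : Set (List ℕ)) : Prop :=
  T.Nonempty ∧ ∀ l ∈ T, ∀ p : List ℕ, p <+: l → p ∈ T

/-- The children of a node `x` in the tree `T`: its one-step extensions lying in `T`. -/
def children (T : Set (List ℕ)) (x : List ℕ) : Set (List ℕ) :=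
  {y ∈ T | ∃ a : ℕ, y = x ++ [a]}

theorem exists_nonleaf_child (T : Set (List ℕ))
    (hbranch : ∀ x ∈ T, children T x = ∅ ∨
      ((children T x).Infinite ∧ {y ∈ children T x | children T y = ∅}.Finite))
    (x : List ℕ) (hx : x ∈ T) (hne : children T x ≠ ∅) (A : Finset ℕ) :
    ∃ a ∉ A, x ++ [a] ∈ T ∧ children T (x ++ [a]) ≠ ∅ := by
  obtain ⟨hinf, hfin⟩ := (hbranch x hx).resolve_left hne
  obtain ⟨y, hy, hy'⟩ :=
    (hinf.sdiff (hfin.union (A.finite_toSet.image fun a => x ++ [a]))).nonempty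
  obtain ⟨hyT, a, rfl⟩ := hy
  refine ⟨a, fun ha => hy' (Or.inr ⟨a, ha, rfl⟩), hyT, fun h => hy' (Or.inl ⟨⟨hyT, a, rfl⟩, h⟩)⟩

/-- Let `T` be an infinite tree in which every node is either a leaf or has infinitely many
children, only finitely many of which are leaves.  Then for every finite `F ⊆ T` and every
`N ≥ 1` there is a non-leaf node `τ ∈ T` of length exactly `N` whose first entry differs
from the first entry of every nonempty `σ ∈ F`. -/
theorem stmt18 (T : Set (List ℕ)) (hT : IsTree T) (hTinf : T.Infinite)
    (hbranch : ∀ x ∈ T, children T x = ∅ ∨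
      ((children T x).Infinite ∧ {y ∈ children T x | children T y = ∅}.Finite))
    (F : Finset (List ℕ)) (hF : ↑F ⊆ T) (N : ℕ) (hN : 1 ≤ N) :
    ∃ τ ∈ T, τ.length = N ∧ children T τ ≠ ∅ ∧
      ∀ σ ∈ F, σ ≠ [] → τ.head? ≠ σ.head? := by
  induction N, hN using Nat.le_induction with
  | base =>
    obtain ⟨l, hl, hl0⟩ := hTinf.exists_notMem_finite (Set.finite_singleton [])
    obtain ⟨b, t, rfl⟩ := List.exists_cons_of_ne_nil hl0
    have hroot : children T [] ≠ ∅ :=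
      Set.Nonempty.ne_empty ⟨[b], hT.2 _ hl _ ⟨t, rfl⟩, b, rfl⟩
    -- The default value of `headD` only adds a harmless extra entry to avoid when `[] ∈ F`.
    obtain ⟨a, ha, haT, hane⟩ := exists_nonleaf_child T hbranch [] (hT.2 _ hl _ List.nil_prefix)
      hroot (F.image fun σ => σ.headD 0)
    refine ⟨[a], haT, rfl, hane, fun σ hσ hσ0 h => ha ?_⟩
    obtain ⟨c, s, rfl⟩ := List.exists_cons_of_ne_nil hσ0
    obtain rfl : a = c := by simpa using h
    exact Finset.mem_image.2 ⟨_, hσ, rfl⟩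
  | succ n hn ih =>
    obtain ⟨τ, hτ, hlen, hne, hhead⟩ := ih
    obtain ⟨a, -, haT, hane⟩ := exists_nonleaf_child T hbranch τ hτ hne ∅
    refine ⟨τ ++ [a], haT, by simp [hlen], hane, fun σ hσ hσ0 => ?_⟩
    have hτ0 : τ ≠ [] := by
      rintro rfl
      simp at hlen
      omega
    rw [List.head?_append_of_ne_nil _ hτ0]
    exact hhead σ hσ hσ0
end
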